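/- Under any uniformly avoiding source μ, suppose (σ-k)^k > 2k - 2, fix a k-tuple α ∈ (Fin σ)^k and an index i ≥ 2k - 1, and let C be the event that W_j ≠ α for every j ∈ {i-k+1, …, i-1, i+1, …, i+k-1}. If μ(C) > 0, then the conditional probability that α occurs at position i given C satisfies μ(W_i = α | C) ≤ 1/((σ-k)^k - (2k - 2)). -/

import Mathlib

open MeasureTheory ProbabilityTheory
open scoped Classical ENNReal

noncomputable section

/-- The `k`-window at position `i` of an infinite string `ω : ℕ → Fin σ`. -/
def Window {σ : ℕ} (k i : ℕ) (ω : ℕ → Fin σ) : Fin k → Fin σ :=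
  fun t => ω (i + t)

/-- A *uniformly avoiding source*: a probability measure `μ` on `ℕ → Fin σ`
(with the product σ-algebra) such that (i) almost surely the first `k`
coordinates are pairwise distinct, and (ii) conditioned on any positive-probability
history of length `n ≥ k` whose last `k` entries are pairwise distinct, the next
character is uniform on the `σ - k` characters not among the last `k` entries. -/
def UniformlyAvoiding {σ : ℕ} (k : ℕ) (μ : Measure (ℕ → Fin σ)) : Prop :=
  IsProbabilityMeasure μ ∧
  (∀ᵐ ω ∂μ, ∀ i j : ℕ, i < k → j < k → i ≠ j → ω i ≠ ω j) ∧
  ∀ n : ℕ, k ≤ n → ∀ a : ℕ → Fin σ,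
    μ {ω | ∀ t < n, ω t = a t} ≠ 0 →
    (∀ p q : ℕ, n - k ≤ p → p < n → n - k ≤ q → q < n → p ≠ q → a p ≠ a q) →
    ∀ b : Fin σ,
      (μ[|{ω | ∀ t < n, ω t = a t}]) {ω | ω n = b} =
        if ∃ t : ℕ, n - k ≤ t ∧ t < n ∧ a t = b then 0
        else 1 / ((σ - k : ℕ) : ℝ≥0∞)

/-!
A history of positive probability has pairwise distinct last `k` entries, so each symbol from
position `k` on has probability at most `1 / (σ - k)` given any event about its past. Multiplying
these bounds over a window, `α` occurs at any position `j ≥ k` with probability at most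
`p = (σ - k) ^ (-k)`. All of the `2 * k - 2` positions excluded by `C` are at least `k`, so a union
bound gives `μ C ≥ 1 - (2 * k - 2) * p`, and the conditional probability is at most
`p / (1 - (2 * k - 2) * p)`.
-/

section Cylinder

variable {A : ℕ → Type*}

theorem cylinder_succ (a : ∀ n, A n) (n : ℕ) :
    PiNat.cylinder a (n + 1) = PiNat.cylinder a n ∩ {ω | ω n = a n} :=
  Set.ext fun _ ↦ Nat.forall_lt_succ_right

theorem cylinder_eq_preimage_domRestrict (a : ∀ n, A n) (n : ℕ) :
    PiNat.cylinder a n = (Set.Iio n).domRestrict ⁻¹' {(Set.Iio n).domRestrict a} := by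
  ext ω
  simp [funext_iff]

variable [∀ n, MeasurableSpace (A n)] [∀ n, MeasurableSingletonClass (A n)]

theorem measurableSet_piNat_cylinder (a : ∀ n, A n) (n : ℕ) :
    MeasurableSet (PiNat.cylinder a n) := by
  rw [PiNat.cylinder_eq_pi]
  exact .pi (Finset.countable_toSet _) fun t _ ↦ measurableSet_singleton (a t)

theorem measure_inter_eval_eq_le_of_dependsOn [∀ n, Countable (A n)] {μ : Measure (∀ n, A n)}
    {c : ℝ≥0∞} {n : ℕ} (hc : ∀ a, μ (PiNat.cylinder a (n + 1)) ≤ c * μ (PiNat.cylinder a n))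
    {E : Set (∀ n, A n)} (hE : DependsOn (· ∈ E) (Set.Iio n)) (b : A n) :
    μ (E ∩ {ω | ω n = b}) ≤ c * μ E := by
  obtain ⟨S, hS⟩ := dependsOn_iff_exists_comp.1 hE
  have hES : E = (Set.Iio n).domRestrict ⁻¹' {p | S p} :=
    Set.ext fun ω ↦ iff_of_eq (congrFun hS ω)
  have h_event : MeasurableSet {ω : ∀ n, A n | ω n = b} :=
    measurable_pi_apply n (measurableSet_singleton b)
  have fiber_measurable (p : ∀ t : Set.Iio n, A t) :
      MeasurableSet ((Set.Iio n).domRestrict ⁻¹' {p}) :=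
    measurable_pi_lambda _ (fun t ↦ measurable_pi_apply t.1) (measurableSet_singleton p)
  have fiber_le (p : ∀ t : Set.Iio n, A t) :
      μ.restrict {ω | ω n = b} ((Set.Iio n).domRestrict ⁻¹' {p}) ≤
        c * μ ((Set.Iio n).domRestrict ⁻¹' {p}) := by
    rw [Measure.restrict_apply (fiber_measurable p)]
    rcases ((Set.Iio n).domRestrict ⁻¹' {p} ∩ {ω : ∀ n, A n | ω n = b}).eq_empty_or_nonempty
      with h_empty | ⟨a, rfl, rfl⟩
    · simp [h_empty]
    · rw [← cylinder_eq_preimage_domRestrict, ← cylinder_succ]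
      exact hc a
  have hS_countable : {p | S p}.Countable := Set.to_countable _
  calc μ (E ∩ {ω | ω n = b})
      = μ.restrict {ω | ω n = b} ((Set.Iio n).domRestrict ⁻¹' {p | S p}) := by
        rw [Measure.restrict_apply' h_event, hES]
    _ = ∑' p : {p | S p}, μ.restrict {ω | ω n = b} ((Set.Iio n).domRestrict ⁻¹' {p.1}) :=
        (tsum_measure_preimage_singleton hS_countable fun p _ ↦ fiber_measurable p).symm
    _ ≤ ∑' p : {p | S p}, c * μ ((Set.Iio n).domRestrict ⁻¹' {p.1}) :=
        ENNReal.tsum_le_tsum fun p ↦ fiber_le p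
    _ = c * μ E := by
        rw [ENNReal.tsum_mul_left,
          tsum_measure_preimage_singleton hS_countable fun p _ ↦ fiber_measurable p, hES]

end Cylinder

section Window

variable {σ : ℕ}

theorem measurable_window (k i : ℕ) : Measurable (Window (σ := σ) k i) :=
  measurable_pi_lambda _ fun _ ↦ measurable_pi_apply _

theorem dependsOn_window (k i : ℕ) : DependsOn (Window (σ := σ) k i) (Set.Iio (i + k)) :=
  fun _ _ h ↦ funext fun t ↦ h _ (by simp)

theorem window_succ_eq_iff {m i : ℕ} {ω : ℕ → Fin σ} {α : Fin (m + 1) → Fin σ} :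
    Window (m + 1) i ω = α ↔ Window m i ω = Fin.init α ∧ ω (i + m) = α (Fin.last m) := by
  simp [funext_iff, Fin.forall_fin_succ', Window, Fin.init]

theorem measure_window_eq_le_pow {μ : Measure (ℕ → Fin σ)} [IsProbabilityMeasure μ]
    {c : ℝ≥0∞} {i : ℕ}
    (hc : ∀ n, i ≤ n → ∀ a, μ (PiNat.cylinder a (n + 1)) ≤ c * μ (PiNat.cylinder a n))
    {m : ℕ} (α : Fin m → Fin σ) : μ {ω | Window m i ω = α} ≤ c ^ m := by
  induction m with
  | zero => simpa using prob_le_one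
  | succ m ih =>
    have h_prefix : DependsOn (· ∈ {ω | Window m i ω = Fin.init α}) (Set.Iio (i + m)) :=
      fun _ _ h ↦ congrArg (· = Fin.init α) (dependsOn_window m i h)
    calc μ {ω | Window (m + 1) i ω = α}
        = μ ({ω | Window m i ω = Fin.init α} ∩ {ω | ω (i + m) = α (Fin.last m)}) := by
          simp only [window_succ_eq_iff, Set.ofPred_and]
      _ ≤ c * μ {ω | Window m i ω = Fin.init α} :=
          measure_inter_eval_eq_le_of_dependsOn (hc _ (Nat.le_add_right i m)) h_prefix _
      _ ≤ c ^ (m + 1) := by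
          rw [pow_succ']
          gcongr
          exact ih _

end Window

namespace UniformlyAvoiding

variable {σ k n : ℕ} {μ : Measure (ℕ → Fin σ)} {a : ℕ → Fin σ}

theorem measure_cylinder_succ (hμ : UniformlyAvoiding k μ) (hkn : k ≤ n)
    (ha : Set.InjOn a (Set.Ico (n - k) n)) :
    μ (PiNat.cylinder a (n + 1)) =
      (if a n ∈ a '' Set.Ico (n - k) n then 0 else ((σ - k : ℕ) : ℝ≥0∞)⁻¹) *
        μ (PiNat.cylinder a n) := by
  obtain ⟨_, -, h_next⟩ := hμ
  rw [cylinder_succ]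
  by_cases h_null : μ (PiNat.cylinder a n) = 0
  · rw [h_null, mul_zero, measure_inter_null_of_null_left _ h_null]
  · have h_cond := h_next n hkn a h_null
      (fun p q hp hpn hq hqn hpq ↦ ha.ne ⟨hp, hpn⟩ ⟨hq, hqn⟩ hpq) (a n)
    rw [← cond_mul_eq_inter (measurableSet_piNat_cylinder a n)]
    congr 1
    simpa [PiNat.cylinder, and_assoc] using h_cond

theorem injOn_Iio_of_measure_cylinder_ne_zero (hμ : UniformlyAvoiding k μ) (hnk : n ≤ k)
    (ha : μ (PiNat.cylinder a n) ≠ 0) : Set.InjOn a (Set.Iio n) := by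
  obtain ⟨ω, hω, h_distinct⟩ :=
    Measure.exists_mem_of_measure_ne_zero_of_ae ha (ae_restrict_of_ae hμ.2.1)
  intro p hp q hq hpq
  by_contra h_ne
  exact h_distinct p q (lt_of_lt_of_le hp hnk) (lt_of_lt_of_le hq hnk) h_ne
    (by rw [hω p hp, hω q hq, hpq])

theorem injOn_Ico_of_measure_cylinder_ne_zero (hμ : UniformlyAvoiding k μ) (hkn : k ≤ n)
    (ha : μ (PiNat.cylinder a n) ≠ 0) : Set.InjOn a (Set.Ico (n - k) n) := by
  induction n, hkn using Nat.le_induction with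
  | base => exact (hμ.injOn_Iio_of_measure_cylinder_ne_zero le_rfl ha).mono fun _ ht ↦ ht.2
  | succ n hkn ih =>
    have h_last : Set.InjOn a (Set.Ico (n - k) n) :=
      ih fun h ↦ ha (measure_mono_null (PiNat.cylinder_anti a n.le_succ) h)
    have h_new : a n ∉ a '' Set.Ico (n - k) n := fun h ↦
      ha (by rw [hμ.measure_cylinder_succ hkn h_last, if_pos h, zero_mul])
    refine ((Set.injOn_insert (by simp)).2 ⟨h_last, h_new⟩).mono fun t ht ↦ ?_
    simp only [Set.mem_insert_iff, Set.mem_Ico] at ht ⊢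
    omega

theorem measure_cylinder_succ_le (hμ : UniformlyAvoiding k μ) (hkn : k ≤ n) (a : ℕ → Fin σ) :
    μ (PiNat.cylinder a (n + 1)) ≤ ((σ - k : ℕ) : ℝ≥0∞)⁻¹ * μ (PiNat.cylinder a n) := by
  by_cases h_null : μ (PiNat.cylinder a n) = 0
  · rw [measure_mono_null (PiNat.cylinder_anti a n.le_succ) h_null]
    exact zero_le
  · rw [hμ.measure_cylinder_succ hkn (hμ.injOn_Ico_of_measure_cylinder_ne_zero hkn h_null)]
    gcongr
    split_ifs <;> simp

theorem measure_window_eq_le (hμ : UniformlyAvoiding k μ) {i m : ℕ} (hki : k ≤ i)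
    (α : Fin m → Fin σ) :
    μ {ω | Window m i ω = α} ≤ (((σ - k) ^ m : ℕ) : ℝ≥0∞)⁻¹ := by
  have := hμ.1
  rw [Nat.cast_pow, ENNReal.inv_pow]
  exact measure_window_eq_le_pow (fun n hin ↦ hμ.measure_cylinder_succ_le (hki.trans hin)) α

end UniformlyAvoiding

theorem cond_compl_biUnion_le {Ω ι : Type*} [MeasurableSpace Ω] {μ : Measure Ω}
    [IsProbabilityMeasure μ] {J : Finset ι} {U : ι → Set Ω} {B : Set Ω} {p : ℝ≥0∞}
    (hU : ∀ j ∈ J, MeasurableSet (U j)) (hUp : ∀ j ∈ J, μ (U j) ≤ p) (hB : μ B ≤ p) :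
    μ[|(⋃ j ∈ J, U j)ᶜ] B ≤ p / (1 - J.card * p) := by
  have h_meas : MeasurableSet (⋃ j ∈ J, U j) := J.measurableSet_biUnion hU
  have h_union : μ (⋃ j ∈ J, U j) ≤ J.card * p :=
    calc μ (⋃ j ∈ J, U j) ≤ ∑ j ∈ J, μ (U j) := measure_biUnion_finset_le J U
      _ ≤ J.card * p := by simpa using J.sum_le_card_nsmul _ p hUp
  rw [cond_apply h_meas.compl, prob_compl_eq_one_sub h_meas, mul_comm, ← div_eq_mul_inv]
  gcongr
  exact (measure_mono Set.inter_subset_right).trans hB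

theorem inv_natCast_div_one_sub_mul_inv {N : ℕ} (hN : N ≠ 0) (m : ℕ) :
    (N : ℝ≥0∞)⁻¹ / (1 - m * (N : ℝ≥0∞)⁻¹) = 1 / ((N - m : ℕ) : ℝ≥0∞) := by
  have hN₀ : (N : ℝ≥0∞) ≠ 0 := Nat.cast_ne_zero.2 hN
  have hN_top : (N : ℝ≥0∞) ≠ ∞ := ENNReal.natCast_ne_top N
  have h_sub : 1 - m * (N : ℝ≥0∞)⁻¹ = (N - m : ℕ) * (N : ℝ≥0∞)⁻¹ := by
    rw [ENNReal.natCast_sub, ENNReal.sub_mul fun _ _ ↦ ENNReal.inv_ne_top.2 hN₀,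
      ENNReal.mul_inv_cancel hN₀ hN_top]
  rw [h_sub, ← ENNReal.mul_div_mul_right 1 _ (ENNReal.inv_ne_zero.2 hN_top)
    (ENNReal.inv_ne_top.2 hN₀), one_mul]

/-- Under any uniformly avoiding source `μ` with `(σ-k)^k > 2k - 2`, for a fixed
`k`-tuple `α` and index `i ≥ 2k - 1`, conditioned on the event `C` that `α` does not
occur at any of the positions `i-k+1, …, i-1, i+1, …, i+k-1`, the probability that
`α` occurs at position `i` is at most `1/((σ-k)^k - (2k-2))`. -/
theorem conditional_occurrence_prob_le {σ k : ℕ} (hk : 1 ≤ k) (hσ : k < σ)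
    (μ : Measure (ℕ → Fin σ)) (hμ : UniformlyAvoiding k μ)
    (hbig : 2 * k - 2 < (σ - k) ^ k)
    (α : Fin k → Fin σ) (i : ℕ) (hi : 2 * k - 1 ≤ i)
    (C : Set (ℕ → Fin σ))
    (hC : C = {ω | ∀ j : ℕ, i + 1 - k ≤ j → j ≤ i + k - 1 → j ≠ i → Window k j ω ≠ α})
    (hpos : μ C ≠ 0) :
    (μ[|C]) {ω | Window k i ω = α} ≤ 1 / (((σ - k) ^ k - (2 * k - 2) : ℕ) : ℝ≥0∞) := by
  have := hμ.1
  set J := (Finset.Icc (i + 1 - k) (i + k - 1)).erase i with hJ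
  have hJ_card : J.card = 2 * k - 2 := by
    rw [Finset.card_erase_of_mem (Finset.mem_Icc.2 (by omega)), Nat.card_Icc]
    omega
  have hJ_ge : ∀ j ∈ J, k ≤ j := fun j hj ↦ by
    rw [Finset.mem_erase, Finset.mem_Icc] at hj
    omega
  have hC_compl : C = (⋃ j ∈ J, {ω | Window k j ω = α})ᶜ := by
    ext ω
    simp only [hC, hJ, Set.mem_ofPred_eq, Set.mem_compl_iff, Set.mem_iUnion, Finset.mem_erase,
      Finset.mem_Icc, not_exists, and_imp]
    tauto
  rw [hC_compl, ← inv_natCast_div_one_sub_mul_inv (by omega), ← hJ_card]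
  exact cond_compl_biUnion_le (fun j _ ↦ measurable_window k j (measurableSet_singleton α))
    (fun j hj ↦ hμ.measure_window_eq_le (hJ_ge j hj) α) (hμ.measure_window_eq_le (by omega) α)
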